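/- Let X, Y, ω, ν be classes of objects in an abelian category A such that: X and Y are pointed and closed under extensions; ω is a relative cogenerator in X with id_X(ω) = 0; and ν is a relative generator in Y with pd_Y(ν) = 0. Then [(X,ω);(ν,Y)] is a strongly finite balanced system if and only if the following hold: (1) Ext¹_A(ω^∧,ν) = 0 and Ext²_A(X,ν) = 0; (2) Ext¹_A(ω,ν^∨) = 0 and Ext²_A(ω,Y) = 0; (3) pd_Y(M) < ∞ for every M ∈ ω^∧; (4) id_X(N) < ∞ for every N ∈ ν^∨; (5) id_ω(ν) = 0. -/

import Mathlib

/-!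
Both directions rest on dimension shifting along the long exact `Ext` sequences.

From a strongly finite balanced system, the conditions are immediate except for the finiteness of
`pd_Y` on `ω^∧` and of `id_X` on `ν^∨`, which are bounded by the length of a resolution.

Conversely, finiteness of `pd_Y(M)` together with `Ext^i(M, ν) = 0` for all `i ≥ 1` forces
`Ext^i(M, Y) = 0` for all `i ≥ 1`: the relative generator gives `Y' ↪ V ↠ B`, so `Ext^i(M, B)`
embeds in `Ext^{i+1}(M, Y')`, and iterating pushes the degree above `pd_Y(M)`
(`extZero_of_relQuasiGenerator`). This applies to every `M ∈ ω^∧`, because the vanishing of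
`Ext^1(ω^∧, ν)` and of all `Ext^i(ω, ν)` spreads to all `Ext^i(ω^∧, ν)`
(`extZero_resHat`). The dual argument treats `ν^∨`. The two remaining conditions, on `X^∧` and
`Y^∨`, use the Auslander–Buchweitz approximation `M ↪ H ↠ A` of `M ∈ X^∧` with `H ∈ ω^∧` and
`A ∈ X` (`exists_hull`) and its dual (`exists_cover`): `Ext^1(M, V)` is trapped between
`Ext^1(H, V) = 0` and `Ext^2(A, V) = 0`.
-/

open CategoryTheory CategoryTheory.Limits

universe w w' v u

namespace BalancedSystems

variable {D : Type u} [Category.{v} D] [Abelian D]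

/-- A class of objects is closed under isomorphisms. -/
def IsoClosed (X : Set D) : Prop := ∀ ⦃A B : D⦄, (A ≅ B) → A ∈ X → B ∈ X

/-- `f : A ⟶ B` and `g : B ⟶ E` form a short exact sequence `0 → A → B → E → 0`. -/
def IsSES {A B E : D} (f : A ⟶ B) (g : B ⟶ E) : Prop :=
  ∃ w : f ≫ g = 0, (ShortComplex.mk f g w).ShortExact

/-- A class is closed under extensions. -/
def ExtensionClosed (X : Set D) : Prop :=
  ∀ ⦃A E B : D⦄ (f : A ⟶ E) (g : E ⟶ B), A ∈ X → B ∈ X → IsSES f g → E ∈ X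

/-- A class is closed under direct summands. -/
def SummandClosed (X : Set D) : Prop :=
  ∀ ⦃A B : D⦄ (i : A ⟶ B) (r : B ⟶ A), i ≫ r = 𝟙 A → B ∈ X → A ∈ X

open ZeroObject in
/-- A class is pointed, i.e. contains the zero object. -/
def Pointed (X : Set D) : Prop := (0 : D) ∈ X

/-- A class is closed under finite coproducts. -/
def FinCoprodClosed (X : Set D) : Prop :=
  Pointed X ∧ ∀ ⦃A B : D⦄, A ∈ X → B ∈ X → (A ⊞ B) ∈ X

/-- `X` is a generator in `X''`: every object of `X''` is an epimorphic image of an object of `X`. -/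
def GeneratorIn (X X'' : Set D) : Prop :=
  ∀ M ∈ X'', ∃ A ∈ X, ∃ p : A ⟶ M, Epi p

/-- `Y` is a cogenerator in `Y''`. -/
def CogeneratorIn (Y Y'' : Set D) : Prop :=
  ∀ N ∈ Y'', ∃ B ∈ Y, ∃ j : N ⟶ B, Mono j

/-- `ω` is a relative quasi-cogenerator in `X`. -/
def RelQuasiCogenerator (ω X : Set D) : Prop :=
  ∀ M ∈ X, ∃ W ∈ ω, ∃ M' ∈ X, ∃ (f : M ⟶ W) (g : W ⟶ M'), IsSES f g

/-- `ω` is a relative cogenerator in `X`. -/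
def RelCogenerator (ω X : Set D) : Prop :=
  ω ⊆ X ∧ RelQuasiCogenerator ω X

/-- `ν` is a relative quasi-generator in `Y`. -/
def RelQuasiGenerator (ν Y : Set D) : Prop :=
  ∀ N ∈ Y, ∃ V ∈ ν, ∃ N' ∈ Y, ∃ (f : N' ⟶ V) (g : V ⟶ N), IsSES f g

/-- `ν` is a relative generator in `Y`. -/
def RelGenerator (ν Y : Set D) : Prop :=
  ν ⊆ Y ∧ RelQuasiGenerator ν Y

/-- A (not necessarily exact) left resolution `⋯ → obj 1 → obj 0 → M → 0`. -/
structure LeftRes (M : D) : Type (max u v) where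
  obj : ℕ → D
  d : ∀ n : ℕ, obj (n+1) ⟶ obj n
  aug : obj 0 ⟶ M
  dd : ∀ n : ℕ, d (n+1) ≫ d n = 0
  daug : d 0 ≫ aug = 0

namespace LeftRes

variable {M : D} (R : LeftRes M)

/-- All terms of the resolution belong to the class `X`. -/
def InClass (X : Set D) : Prop := ∀ n, R.obj n ∈ X

/-- The resolution is `Hom(X,-)`-acyclic, i.e. proper. -/
def IsProper (X : Set D) : Prop :=
  ∀ A ∈ X,
    (∀ f : A ⟶ M, ∃ g : A ⟶ R.obj 0, g ≫ R.aug = f) ∧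
    (∀ f : A ⟶ R.obj 0, f ≫ R.aug = 0 → ∃ g : A ⟶ R.obj 1, g ≫ R.d 0 = f) ∧
    (∀ (n : ℕ) (f : A ⟶ R.obj (n+1)), f ≫ R.d n = 0 → ∃ g : A ⟶ R.obj (n+2), g ≫ R.d (n+1) = f)

/-- The resolution (with its augmentation) is `Hom(-,Y)`-acyclic. -/
def IsCoacyclic (Y : Set D) : Prop :=
  ∀ B ∈ Y,
    (∀ u : M ⟶ B, R.aug ≫ u = 0 → u = 0) ∧
    (∀ u : R.obj 0 ⟶ B, R.d 0 ≫ u = 0 → ∃ v : M ⟶ B, R.aug ≫ v = u) ∧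
    (∀ (n : ℕ) (u : R.obj (n+1) ⟶ B), R.d (n+1) ≫ u = 0 → ∃ v : R.obj n ⟶ B, R.d n ≫ v = u)

/-- The augmented complex `⋯ → obj 1 → obj 0 → M → 0` is exact. -/
def IsExactRes : Prop :=
  Epi R.aug ∧ (ShortComplex.mk (R.d 0) R.aug R.daug).Exact ∧
    ∀ n : ℕ, (ShortComplex.mk (R.d (n+1)) (R.d n) (R.dd n)).Exact

/-- The resolution is admissible: `obj 1 → obj 0 → M → 0` is exact. -/
def IsAdmissible : Prop :=
  Epi R.aug ∧ (ShortComplex.mk (R.d 0) R.aug R.daug).Exact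

end LeftRes

/-- The class of objects admitting a proper left `X`-resolution. -/
def LPRes (X : Set D) : Set D :=
  {M | ∃ R : LeftRes M, R.InClass X ∧ R.IsProper X}

/-- A (not necessarily exact) right resolution `0 → N → obj 0 → obj 1 → ⋯`. -/
structure RightRes (N : D) : Type (max u v) where
  obj : ℕ → D
  d : ∀ n : ℕ, obj n ⟶ obj (n+1)
  aug : N ⟶ obj 0
  dd : ∀ n : ℕ, d n ≫ d (n+1) = 0
  daug : aug ≫ d 0 = 0

namespace RightRes

variable {N : D} (S : RightRes N)

def InClass (Y : Set D) : Prop := ∀ n, S.obj n ∈ Y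

/-- The resolution is `Hom(-,Y)`-acyclic, i.e. proper. -/
def IsProper (Y : Set D) : Prop :=
  ∀ B ∈ Y,
    (∀ f : N ⟶ B, ∃ g : S.obj 0 ⟶ B, S.aug ≫ g = f) ∧
    (∀ u : S.obj 0 ⟶ B, S.aug ≫ u = 0 → ∃ v : S.obj 1 ⟶ B, S.d 0 ≫ v = u) ∧
    (∀ (n : ℕ) (u : S.obj (n+1) ⟶ B), S.d n ≫ u = 0 → ∃ v : S.obj (n+2) ⟶ B, S.d (n+1) ≫ v = u)

/-- The resolution (with its augmentation) is `Hom(X,-)`-acyclic. -/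
def IsCoacyclic (X : Set D) : Prop :=
  ∀ A ∈ X,
    (∀ u : A ⟶ N, u ≫ S.aug = 0 → u = 0) ∧
    (∀ u : A ⟶ S.obj 0, u ≫ S.d 0 = 0 → ∃ v : A ⟶ N, v ≫ S.aug = u) ∧
    (∀ (n : ℕ) (u : A ⟶ S.obj (n+1)), u ≫ S.d (n+1) = 0 → ∃ v : A ⟶ S.obj n, v ≫ S.d n = u)

/-- The augmented complex `0 → N → obj 0 → obj 1 → ⋯` is exact. -/
def IsExactRes : Prop :=
  Mono S.aug ∧ (ShortComplex.mk S.aug (S.d 0) S.daug).Exact ∧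
    ∀ n : ℕ, (ShortComplex.mk (S.d n) (S.d (n+1)) (S.dd n)).Exact

/-- The resolution is admissible: `0 → N → obj 0 → obj 1` is exact. -/
def IsAdmissible : Prop :=
  Mono S.aug ∧ (ShortComplex.mk S.aug (S.d 0) S.daug).Exact

end RightRes

/-- The class of objects admitting a proper right `Y`-resolution. -/
def RPRes (Y : Set D) : Set D :=
  {N | ∃ S : RightRes N, S.InClass Y ∧ S.IsProper Y}

/-- `(X,Y)` is a balanced pair with respect to `(Xt,Yt)`. -/
def IsBalancedPair (X Y Xt Yt : Set D) : Prop :=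
  X ⊆ Xt ∧ Xt ⊆ LPRes X ∧ Y ⊆ Yt ∧ Yt ⊆ RPRes Y ∧
  (∀ M ∈ Xt, ∃ R : LeftRes M, R.InClass X ∧ R.IsProper X ∧ R.IsCoacyclic Y) ∧
  (∀ N ∈ Yt, ∃ S : RightRes N, S.InClass Y ∧ S.IsProper Y ∧ S.IsCoacyclic X)

/-- `(X,Y)` is an admissible balanced pair with respect to `(Xt,Yt)`. -/
def IsAdmissibleBalancedPair (X Y Xt Yt : Set D) : Prop :=
  X ⊆ Xt ∧ Xt ⊆ LPRes X ∧ Y ⊆ Yt ∧ Yt ⊆ RPRes Y ∧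
  (∀ M ∈ Xt, ∃ R : LeftRes M, R.InClass X ∧ R.IsProper X ∧ R.IsCoacyclic Y ∧ R.IsAdmissible) ∧
  (∀ N ∈ Yt, ∃ S : RightRes N, S.InClass Y ∧ S.IsProper Y ∧ S.IsCoacyclic X ∧ S.IsAdmissible)

/-- Objects of left `X`-resolution dimension at most `n`. -/
def ResDimLE (X : Set D) : ℕ → Set D
  | 0 => X
  | (n+1) => {M | ∃ K ∈ ResDimLE X n, ∃ A ∈ X, ∃ (f : K ⟶ A) (g : A ⟶ M), IsSES f g}

/-- `X^∧` : objects of finite left `X`-resolution dimension. -/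
def ResHat (X : Set D) : Set D := {M | ∃ n, M ∈ ResDimLE X n}

/-- Objects of right `X`-resolution dimension at most `n`. -/
def CoresDimLE (X : Set D) : ℕ → Set D
  | 0 => X
  | (n+1) => {M | ∃ A ∈ X, ∃ K ∈ CoresDimLE X n, ∃ (f : M ⟶ A) (g : A ⟶ K), IsSES f g}

/-- `X^∨` : objects of finite right `X`-resolution dimension. -/
def CoresVee (X : Set D) : Set D := {M | ∃ n, M ∈ CoresDimLE X n}

section Ext

variable [HasExt.{w} D]

/-- `Ext^i (A, B) = 0`. -/
def ExtZero (A B : D) (i : ℕ) : Prop := Subsingleton (Abelian.Ext.{w} A B i)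

/-- `X^⊥`: all higher Ext's from objects of `X` vanish. -/
def ExtPerp (X : Set D) : Set D :=
  {N | ∀ A ∈ X, ∀ i : ℕ, 1 ≤ i → ExtZero.{w} A N i}

/-- `^⊥Y`: all higher Ext's into objects of `Y` vanish. -/
def PerpExt (Y : Set D) : Set D :=
  {M | ∀ B ∈ Y, ∀ i : ℕ, 1 ≤ i → ExtZero.{w} M B i}

/-- `[(X,ω);(ν,Y)]` is a finite balanced system. -/
structure IsFiniteBalancedSystem (X ω ν Y : Set D) : Prop where
  pointedX : Pointed X
  extClosedX : ExtensionClosed X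
  pointedY : Pointed Y
  extClosedY : ExtensionClosed Y
  relCogenOmega : RelCogenerator ω X
  idXomega : ∀ A ∈ X, ∀ W ∈ ω, ∀ i : ℕ, 1 ≤ i → ExtZero.{w} A W i
  relGenNu : RelGenerator ν Y
  pdYnu : ∀ V ∈ ν, ∀ B ∈ Y, ∀ i : ℕ, 1 ≤ i → ExtZero.{w} V B i
  ext1_hatX_nu : ∀ M ∈ ResHat X, ∀ V ∈ ν, ExtZero.{w} M V 1
  ext1_hatOmega_Y : ∀ H ∈ ResHat ω, ∀ B ∈ Y, ExtZero.{w} H B 1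
  ext1_omega_veeY : ∀ W ∈ ω, ∀ N ∈ CoresVee Y, ExtZero.{w} W N 1
  ext1_X_veeNu : ∀ A ∈ X, ∀ L ∈ CoresVee ν, ExtZero.{w} A L 1

/-- `[(X,ω);(ν,Y)]` is a strongly finite balanced system. -/
structure IsStronglyFiniteBalancedSystem (X ω ν Y : Set D)
    extends IsFiniteBalancedSystem.{w} X ω ν Y : Prop where
  pdYomega : ∀ W ∈ ω, ∀ B ∈ Y, ∀ i : ℕ, 1 ≤ i → ExtZero.{w} W B i
  idXnu : ∀ A ∈ X, ∀ V ∈ ν, ∀ i : ℕ, 1 ≤ i → ExtZero.{w} A V i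

end Ext

end BalancedSystems
namespace BalancedSystems

variable {D : Type u} [Category.{v} D] [Abelian D]

/-- A bounded below complex `⋯ → M 2 → M 1 → M 0 → 0`, where `M 0` plays the
role of the `(-1)`-st term `M₋₁`. -/
structure BBComplex (D : Type u) [Category.{v} D] [Abelian D] : Type (max u v) where
  M : ℕ → D
  d : ∀ n : ℕ, M (n+1) ⟶ M n
  dd : ∀ n : ℕ, d (n+1) ≫ d n = 0

/-- A bounded below complex is `Hom(X,-)`-acyclic. -/
def BBComplex.HomAcyclic (X : Set D) (K : BBComplex D) : Prop :=
  ∀ A ∈ X,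
    (∀ f : A ⟶ K.M 0, ∃ g : A ⟶ K.M 1, g ≫ K.d 0 = f) ∧
    (∀ (n : ℕ) (f : A ⟶ K.M (n+1)), f ≫ K.d n = 0 →
      ∃ g : A ⟶ K.M (n+2), g ≫ K.d (n+1) = f)

/-- A short complex `Z → Mo → Z'` (i.e. `0 → Z → Mo → Z' → 0`) is
`Hom(X,-)`-acyclic. -/
def ShortHomAcyclic (X : Set D) {Z Mo Z' : D} (ι : Z ⟶ Mo) (p : Mo ⟶ Z') : Prop :=
  ∀ A ∈ X,
    (∀ u : A ⟶ Z, u ≫ ι = 0 → u = 0) ∧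
    (∀ u : A ⟶ Mo, u ≫ p = 0 → ∃ v : A ⟶ Z, v ≫ ι = u) ∧
    (∀ u : A ⟶ Z', ∃ v : A ⟶ Mo, v ≫ p = u)

namespace LeftRes

variable {M : D} (R : LeftRes M)

/-- Precomposition with the differential, as a morphism of abelian groups
`Hom(obj n, N) →+ Hom(obj (n+1), N)`. -/
def precompHom (N : D) (n : ℕ) : (R.obj n ⟶ N) →+ (R.obj (n+1) ⟶ N) :=
  AddMonoidHom.mk' (fun g => R.d n ≫ g) (by intro a b; simp)

/-- Cocycles of the complex `Hom(R, N)` in degree `n`. -/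
def cocycles (N : D) (n : ℕ) : AddSubgroup (R.obj n ⟶ N) := (R.precompHom N n).ker

/-- The relative extension groups `Ext̲ⁱ_X(M,N)` computed from the proper left
`X`-resolution `R` of `M`: the `i`-th cohomology of `Hom(R, N)`. -/
def ExtGrp (N : D) : ℕ → Type v
  | 0 => R.cocycles N 0
  | (n+1) => R.cocycles N (n+1) ⧸
      ((R.precompHom N n).range.addSubgroupOf (R.cocycles N (n+1)))

noncomputable instance (N : D) : ∀ i, AddCommGroup (R.ExtGrp N i)
  | 0 => inferInstanceAs (AddCommGroup (R.cocycles N 0))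
  | (n+1) => inferInstanceAs (AddCommGroup (R.cocycles N (n+1) ⧸
      ((R.precompHom N n).range.addSubgroupOf (R.cocycles N (n+1)))))

/-- Functoriality of `Ext̲⁰_X(M,-)`: postcomposition on `0`-cocycles. -/
def ext0Map {N N' : D} (g : N ⟶ N') (x : R.ExtGrp N 0) : R.ExtGrp N' 0 :=
  (⟨(x : R.cocycles N 0).1 ≫ g, by
      have hx := (x : R.cocycles N 0).2
      simp only [cocycles, AddMonoidHom.mem_ker, precompHom, AddMonoidHom.mk'_apply] at hx ⊢
      rw [← Category.assoc, hx, zero_comp]⟩ : R.cocycles N' 0)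

end LeftRes

namespace RightRes

variable {N : D} (S : RightRes N)

/-- Postcomposition with the differential, as a morphism of abelian groups
`Hom(M, obj n) →+ Hom(M, obj (n+1))`. -/
def postcompHom (M : D) (n : ℕ) : (M ⟶ S.obj n) →+ (M ⟶ S.obj (n+1)) :=
  AddMonoidHom.mk' (fun g => g ≫ S.d n) (by intro a b; simp)

/-- Cocycles of the complex `Hom(M, S)` in degree `n`. -/
def cocycles (M : D) (n : ℕ) : AddSubgroup (M ⟶ S.obj n) := (S.postcompHom M n).ker

/-- The relative extension groups `Ext̄ⁱ_Y(M,N)` computed from the proper right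
`Y`-resolution `S` of `N`: the `i`-th cohomology of `Hom(M, S)`. -/
def ExtGrp (M : D) : ℕ → Type v
  | 0 => S.cocycles M 0
  | (n+1) => S.cocycles M (n+1) ⧸
      ((S.postcompHom M n).range.addSubgroupOf (S.cocycles M (n+1)))

noncomputable instance (M : D) : ∀ i, AddCommGroup (S.ExtGrp M i)
  | 0 => inferInstanceAs (AddCommGroup (S.cocycles M 0))
  | (n+1) => inferInstanceAs (AddCommGroup (S.cocycles M (n+1) ⧸
      ((S.postcompHom M n).range.addSubgroupOf (S.cocycles M (n+1)))))

end RightRes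

section ChainComplexes

/-- The class of complexes all of whose terms lie in `X`. -/
def chClass (X : Set D) : Set (ChainComplex D ℤ) := {K | ∀ n : ℤ, K.X n ∈ X}

/-- `ν̃` : the class of exact complexes all of whose cycle objects lie in `ν`. -/
noncomputable def tildeClass (ν : Set D) : Set (ChainComplex D ℤ) :=
  {K | (∀ n : ℤ, K.ExactAt n) ∧ ∀ n : ℤ, (kernel (K.d n (n-1)) : D) ∈ ν}

end ChainComplexes

end BalancedSystems
namespace BalancedSystems

variable {D : Type u} [Category.{v} D] [Abelian D]

section HomComplex

variable (K L : ChainComplex D ℤ)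

/-- The `m`-th term of the Hom-complex `Hom(K,L)`:
`∏ᵢ Hom(Kᵢ, L_{i+m})`. -/
abbrev HomCgrp (m : ℤ) : Type v := ∀ i : ℤ, K.X i ⟶ L.X (i + m)

/-- The differential `∂_m` of the Hom-complex `Hom(K,L)`, going from degree `m`
to degree `m' = m - 1`, given by `∂_m(f)ᵢ = ∂^L_{m+i} ∘ fᵢ − (−1)^m fᵢ₋₁ ∘ ∂^K_i`. -/
noncomputable def homCdiff (m m' : ℤ) (h : m' = m - 1) :
    HomCgrp K L m →+ HomCgrp K L m' :=
  AddMonoidHom.mk'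
    (fun f i => f i ≫ L.d (i + m) (i + m') -
      (m.negOnePow : ℤ) •
        (K.d i (i-1) ≫ f (i-1) ≫ eqToHom (congrArg L.X (show (i-1) + m = i + m' by omega))))
    (by
      intro a b
      funext i
      simp only [Pi.add_apply, Preadditive.add_comp, Preadditive.comp_add, smul_add]
      abel)

/-- The `m`-th cohomology group of the Hom-complex `Hom(K,L)`. -/
noncomputable def HomCoh (m : ℤ) : Type v :=
  (homCdiff K L m (m-1) rfl).ker ⧸
    ((homCdiff K L (m+1) m (by omega)).range.addSubgroupOf (homCdiff K L m (m-1) rfl).ker)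

noncomputable instance (m : ℤ) : AddCommGroup (HomCoh K L m) :=
  inferInstanceAs (AddCommGroup ((homCdiff K L m (m-1) rfl).ker ⧸
    ((homCdiff K L (m+1) m (by omega)).range.addSubgroupOf (homCdiff K L m (m-1) rfl).ker)))

end HomComplex

end BalancedSystems
namespace BalancedSystems

variable {D : Type u} [Category.{v} D] [Abelian D]

/-- `L_X(X',X'')`: objects of `X''` admitting a proper left `X`-resolution with
all cycles in `X'`. -/
noncomputable def LClass (X X' X'' : Set D) : Set D :=
  {M | M ∈ X'' ∧ ∃ R : LeftRes M, R.InClass X ∧ R.IsProper X ∧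
    (kernel R.aug : D) ∈ X' ∧ ∀ n : ℕ, (kernel (R.d n) : D) ∈ X'}

/-- `L̄_X(X',X'') := L_X(X',X'') ∪ X`. -/
noncomputable def LBarClass (X X' X'' : Set D) : Set D := LClass X X' X'' ∪ X

/-- `R^Y(Y'',Y')`: objects of `Y''` admitting a proper right `Y`-resolution with
all cocycles in `Y'`. -/
noncomputable def RClass (Y Y'' Y' : Set D) : Set D :=
  {N | N ∈ Y'' ∧ ∃ S : RightRes N, S.InClass Y ∧ S.IsProper Y ∧
    (cokernel S.aug : D) ∈ Y' ∧ ∀ n : ℕ, (cokernel (S.d n) : D) ∈ Y'}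

/-- `R̄^Y(Y'',Y') := R^Y(Y'',Y') ∪ Y`. -/
noncomputable def RBarClass (Y Y'' Y' : Set D) : Set D := RClass Y Y'' Y' ∪ Y

section Ext

variable [HasExt.{w} D]

/-- `[(X,ω);(ν,Y)]` is a balanced system with respect to `[(X',X'');(Y'',Y')]`. -/
def IsBalancedSystem (X ω ν Y X' X'' Y'' Y' : Set D) : Prop :=
  (X ⊆ X'' ∧ X' ⊆ X'' ∧ X'' ⊆ LPRes X) ∧
  (Y ⊆ Y'' ∧ Y' ⊆ Y'' ∧ Y'' ⊆ RPRes Y) ∧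
  GeneratorIn X X'' ∧
  CogeneratorIn Y Y'' ∧
  RelGenerator ν Y ∧
  RelCogenerator ω X ∧
  ((∀ M ∈ X'', ∀ V ∈ ν, ExtZero.{w} M V 1) ∧ (∀ L ∈ X', ∀ B ∈ Y, ExtZero.{w} L B 1)) ∧
  ((∀ W ∈ ω, ∀ N ∈ Y'', ExtZero.{w} W N 1) ∧ (∀ A ∈ X, ∀ P ∈ Y', ExtZero.{w} A P 1))

/-- `(X,Y)` is a complete hereditary cotorsion pair. -/
def IsCompleteHereditaryCotorsionPair (X Y : Set D) : Prop :=
  (∀ M : D, M ∈ X ↔ ∀ B ∈ Y, ExtZero.{w} M B 1) ∧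
  (∀ N : D, N ∈ Y ↔ ∀ A ∈ X, ExtZero.{w} A N 1) ∧
  (∀ M : D, ∃ K ∈ Y, ∃ A ∈ X, ∃ (f : K ⟶ A) (g : A ⟶ M), IsSES f g) ∧
  (∀ M : D, ∃ B ∈ Y, ∃ Q ∈ X, ∃ (f : M ⟶ B) (g : B ⟶ Q), IsSES f g) ∧
  (∀ A ∈ X, ∀ B ∈ Y, ∀ i : ℕ, 1 ≤ i → ExtZero.{w} A B i)

/-- `LPRes⁰(X)`: objects of `LPRes(X)` admitting an exact left `X`-resolution
with all cycles in `X^⊥`. -/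
noncomputable def LPRes0 (X : Set D) : Set D :=
  LPRes X ∩ {M | ∃ R : LeftRes M, R.InClass X ∧ R.IsExactRes ∧
    (kernel R.aug : D) ∈ ExtPerp.{w} X ∧ ∀ n : ℕ, (kernel (R.d n) : D) ∈ ExtPerp.{w} X}

/-- `RPRes⁰(Y)`: objects of `RPRes(Y)` admitting an exact right `Y`-resolution
with all cocycles in `^⊥Y`. -/
noncomputable def RPRes0 (Y : Set D) : Set D :=
  RPRes Y ∩ {N | ∃ S : RightRes N, S.InClass Y ∧ S.IsExactRes ∧
    (cokernel S.aug : D) ∈ PerpExt.{w} Y ∧ ∀ n : ℕ, (cokernel (S.d n) : D) ∈ PerpExt.{w} Y}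

end Ext

end BalancedSystems


namespace BalancedSystems

variable {D : Type u} [Category.{v} D] [Abelian D]

/-! ### Vanishing of Ext along short exact sequences -/

section Vanishing

variable [HasExt.{w} D]

lemma extZero_right_quot {A B E M : D} {f : A ⟶ B} {g : B ⟶ E} (h : IsSES f g) {i : ℕ}
    (hB : ExtZero.{w} M B i) (hA : ExtZero.{w} M A (i + 1)) : ExtZero.{w} M E i := by
  obtain ⟨w, hS⟩ := h
  refine subsingleton_of_forall_eq 0 fun x => ?_
  obtain ⟨y, rfl⟩ := Abelian.Ext.covariant_sequence_exact₃ M hS x rfl (hA.elim _ _)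
  rw [hB.elim y 0, Abelian.Ext.zero_comp]

lemma extZero_right_sub {A B E M : D} {f : A ⟶ B} {g : B ⟶ E} (h : IsSES f g) {i : ℕ}
    (hE : ExtZero.{w} M E i) (hB : ExtZero.{w} M B (i + 1)) : ExtZero.{w} M A (i + 1) := by
  obtain ⟨w, hS⟩ := h
  refine subsingleton_of_forall_eq 0 fun x => ?_
  obtain ⟨y, rfl⟩ := Abelian.Ext.covariant_sequence_exact₁ M hS x (hB.elim _ _) rfl
  rw [hE.elim y 0, Abelian.Ext.zero_comp]

lemma extZero_left_sub {A B E N : D} {f : A ⟶ B} {g : B ⟶ E} (h : IsSES f g) {i : ℕ}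
    (hB : ExtZero.{w} B N i) (hE : ExtZero.{w} E N (i + 1)) : ExtZero.{w} A N i := by
  obtain ⟨w, hS⟩ := h
  refine subsingleton_of_forall_eq 0 fun x => ?_
  obtain ⟨y, rfl⟩ := Abelian.Ext.contravariant_sequence_exact₁ hS N x (add_comm 1 i) (hE.elim _ _)
  rw [hB.elim y 0, Abelian.Ext.comp_zero]

lemma extZero_left_quot {A B E N : D} {f : A ⟶ B} {g : B ⟶ E} (h : IsSES f g) {i : ℕ}
    (hA : ExtZero.{w} A N i) (hB : ExtZero.{w} B N (i + 1)) : ExtZero.{w} E N (i + 1) := by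
  obtain ⟨w, hS⟩ := h
  refine subsingleton_of_forall_eq 0 fun x => ?_
  obtain ⟨y, rfl⟩ := Abelian.Ext.contravariant_sequence_exact₃ hS N x (hB.elim _ _) (add_comm 1 i)
  rw [hA.elim y 0, Abelian.Ext.comp_zero]

/-! ### Dimension shifting -/

/-- If `Ext^i(M, ν) = 0` for all `i ≥ 1` and `pd_Y(M)` is finite, then `Ext^i(M, Y) = 0` for all
`i ≥ 1`. -/
lemma extZero_of_relQuasiGenerator {ν Y : Set D} (hν : RelQuasiGenerator ν Y) {M : D}
    (h : ∀ V ∈ ν, ∀ i : ℕ, 1 ≤ i → ExtZero.{w} M V i)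
    (hfin : ∃ n : ℕ, ∀ i : ℕ, n < i → ∀ B ∈ Y, ExtZero.{w} M B i) :
    ∀ B ∈ Y, ∀ i : ℕ, 1 ≤ i → ExtZero.{w} M B i := by
  obtain ⟨n, hn⟩ := hfin
  have key : ∀ k i : ℕ, 1 ≤ i → n < i + k → ∀ B ∈ Y, ExtZero.{w} M B i := by
    intro k
    induction k with
    | zero => exact fun i _ hi => hn i hi
    | succ k ih =>
      intro i hi hik B hB
      obtain ⟨V, hV, B', hB', f, g, hfg⟩ := hν B hB
      exact extZero_right_quot hfg (h V hV i hi) (ih (i + 1) (by omega) (by omega) B' hB')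
  exact fun B hB i hi => key n i hi (by omega) B hB

/-- If `Ext^i(ω, N) = 0` for all `i ≥ 1` and `id_X(N)` is finite, then `Ext^i(X, N) = 0` for all
`i ≥ 1`. -/
lemma extZero_of_relQuasiCogenerator {ω X : Set D} (hω : RelQuasiCogenerator ω X) {N : D}
    (h : ∀ W ∈ ω, ∀ i : ℕ, 1 ≤ i → ExtZero.{w} W N i)
    (hfin : ∃ n : ℕ, ∀ i : ℕ, n < i → ∀ A ∈ X, ExtZero.{w} A N i) :
    ∀ A ∈ X, ∀ i : ℕ, 1 ≤ i → ExtZero.{w} A N i := by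
  obtain ⟨n, hn⟩ := hfin
  have key : ∀ k i : ℕ, 1 ≤ i → n < i + k → ∀ A ∈ X, ExtZero.{w} A N i := by
    intro k
    induction k with
    | zero => exact fun i _ hi => hn i hi
    | succ k ih =>
      intro i hi hik A hA
      obtain ⟨W, hW, A', hA', f, g, hfg⟩ := hω A hA
      exact extZero_left_sub hfg (h W hW i hi) (ih (i + 1) (by omega) (by omega) A' hA')
  exact fun A hA i hi => key n i hi (by omega) A hA

/-- A resolution of length `n` by objects left orthogonal to `N` bounds the nonvanishing degrees
of `Ext(M, N)` by `n`. -/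
lemma extZero_resDimLE {ω : Set D} {N : D}
    (h : ∀ W ∈ ω, ∀ i : ℕ, 1 ≤ i → ExtZero.{w} W N i) :
    ∀ n : ℕ, ∀ M ∈ ResDimLE ω n, ∀ i : ℕ, n < i → ExtZero.{w} M N i := by
  intro n
  induction n with
  | zero => exact fun M hM i hi => h M hM i hi
  | succ n ih =>
    rintro M ⟨K, hK, W, hW, f, g, hfg⟩ i hi
    obtain ⟨i, rfl⟩ : ∃ j, i = j + 1 := ⟨i - 1, by omega⟩
    exact extZero_left_quot hfg (ih K hK i (by omega)) (h W hW _ (by omega))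

/-- A coresolution of length `n` by objects right orthogonal to `M` bounds the nonvanishing degrees
of `Ext(M, N)` by `n`. -/
lemma extZero_coresDimLE {ν : Set D} {M : D}
    (h : ∀ V ∈ ν, ∀ i : ℕ, 1 ≤ i → ExtZero.{w} M V i) :
    ∀ n : ℕ, ∀ N ∈ CoresDimLE ν n, ∀ i : ℕ, n < i → ExtZero.{w} M N i := by
  intro n
  induction n with
  | zero => exact fun N hN i hi => h N hN i hi
  | succ n ih =>
    rintro N ⟨V, hV, K, hK, f, g, hfg⟩ i hi
    obtain ⟨i, rfl⟩ : ∃ j, i = j + 1 := ⟨i - 1, by omega⟩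
    exact extZero_right_sub hfg (ih K hK i (by omega)) (h V hV _ (by omega))

/-- Syzygies of objects of `ω^∧` stay in `ω^∧`, so the vanishing of `Ext^1(ω^∧, N)` propagates to
all higher degrees once `ω` is left orthogonal to `N`. -/
lemma extZero_resHat {ω : Set D} {N : D}
    (h : ∀ W ∈ ω, ∀ i : ℕ, 1 ≤ i → ExtZero.{w} W N i)
    (h1 : ∀ H ∈ ResHat ω, ExtZero.{w} H N 1) :
    ∀ H ∈ ResHat ω, ∀ i : ℕ, 1 ≤ i → ExtZero.{w} H N i := by
  intro H hH i hi
  induction i, hi using Nat.le_induction generalizing H with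
  | base => exact h1 H hH
  | succ i hi ih =>
    obtain ⟨n, hn⟩ := hH
    cases n with
    | zero => exact h H hn _ (by omega)
    | succ n =>
      obtain ⟨K, hK, W, hW, f, g, hfg⟩ := hn
      exact extZero_left_quot hfg (ih K ⟨n, hK⟩) (h W hW _ (by omega))

/-- Dual of `extZero_resHat`: the cosyzygies of objects of `ν^∨` stay in `ν^∨`. -/
lemma extZero_coresVee {ν : Set D} {M : D}
    (h : ∀ V ∈ ν, ∀ i : ℕ, 1 ≤ i → ExtZero.{w} M V i)
    (h1 : ∀ L ∈ CoresVee ν, ExtZero.{w} M L 1) :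
    ∀ L ∈ CoresVee ν, ∀ i : ℕ, 1 ≤ i → ExtZero.{w} M L i := by
  intro L hL i hi
  induction i, hi using Nat.le_induction generalizing L with
  | base => exact h1 L hL
  | succ i hi ih =>
    obtain ⟨n, hn⟩ := hL
    cases n with
    | zero => exact h L hn _ (by omega)
    | succ n =>
      obtain ⟨V, hV, K, hK, f, g, hfg⟩ := hn
      exact extZero_right_sub hfg (ih K ⟨n, hK⟩) (h V hV _ (by omega))

end Vanishing

/-! ### Auslander–Buchweitz approximations -/

/-- The pushout of a short exact sequence along a map out of its left term. -/
lemma isSES_pushout {A B E P : D} {f : A ⟶ B} {g : B ⟶ E} (h : IsSES f g) (k : A ⟶ P) :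
    IsSES (pushout.inr f k) (pushout.desc g 0 (by rw [h.1, comp_zero]) : pushout f k ⟶ E) := by
  obtain ⟨w, hS⟩ := h
  have : Mono f := hS.mono_f
  have : Epi g := hS.epi_g
  have he : Epi (pushout.desc g 0 (by rw [w, comp_zero]) : pushout f k ⟶ E) :=
    epi_of_epi_fac (pushout.inl_desc g 0 _)
  have hm : Mono (pushout.inr f k) := inferInstance
  refine ⟨pushout.inr_desc g 0 _, { exact := ?_, mono_f := hm, epi_g := he }⟩
  refine ShortComplex.exact_of_g_is_cokernel _ (CokernelCofork.IsColimit.ofπ' _ _ ?_)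
  intro T x hx
  have hx' : pushout.inr f k ≫ x = 0 := hx
  have h0 : f ≫ pushout.inl f k ≫ x = 0 := by
    rw [pushout.condition_assoc, hx', comp_zero]
  refine ⟨hS.exact.desc (pushout.inl f k ≫ x) h0, ?_⟩
  apply pushout.hom_ext
  · rw [pushout.inl_desc_assoc]
    exact hS.exact.g_desc _ _
  · rw [pushout.inr_desc_assoc, zero_comp, hx']

/-- The pullback of a short exact sequence along a map into its right term. -/
lemma isSES_pullback {A B E P : D} {f : A ⟶ B} {g : B ⟶ E} (h : IsSES f g) (k : P ⟶ E) :
    IsSES (pullback.lift f 0 (by rw [h.1, zero_comp]) : A ⟶ pullback g k) (pullback.snd g k) := by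
  obtain ⟨w, hS⟩ := h
  have : Mono f := hS.mono_f
  have : Epi g := hS.epi_g
  have he : Mono (pullback.lift f 0 (by rw [w, zero_comp]) : A ⟶ pullback g k) :=
    mono_of_mono_fac (pullback.lift_fst f 0 _)
  have hm : Epi (pullback.snd g k) := inferInstance
  refine ⟨pullback.lift_snd f 0 _, { exact := ?_, mono_f := he, epi_g := hm }⟩
  refine ShortComplex.exact_of_f_is_kernel _ (KernelFork.IsLimit.ofι' _ _ ?_)
  intro T x hx
  have hx' : x ≫ pullback.snd g k = 0 := hx
  have h0 : (x ≫ pullback.fst g k) ≫ g = 0 := by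
    rw [Category.assoc, pullback.condition, reassoc_of% hx', zero_comp]
  refine ⟨hS.exact.lift (x ≫ pullback.fst g k) h0, ?_⟩
  apply pullback.hom_ext
  · rw [Category.assoc, pullback.lift_fst]
    exact hS.exact.lift_f _ _
  · rw [Category.assoc, pullback.lift_snd, comp_zero, hx']

/-- Two short exact sequences with the same left term have a common pushout. -/
lemma exists_pushout_ses {K A M H A' : D} {f : K ⟶ A} {g : A ⟶ M} {f' : K ⟶ H} {g' : H ⟶ A'}
    (h : IsSES f g) (h' : IsSES f' g') :
    ∃ (E : D) (i : H ⟶ E) (p : E ⟶ M) (i' : A ⟶ E) (p' : E ⟶ A'), IsSES i p ∧ IsSES i' p' := by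
  obtain ⟨w, hS⟩ := isSES_pushout h f'
  obtain ⟨w', hS'⟩ := isSES_pushout h' f
  let e := pushoutSymmetry f' f
  refine ⟨_, _, _, pushout.inl f f', e.inv ≫ pushout.desc g' 0 (by rw [h'.1, comp_zero]),
    ⟨w, hS⟩, by simpa [e] using w', ?_⟩
  refine ShortComplex.shortExact_of_iso (S₁ := ShortComplex.mk _ _ w')
    (ShortComplex.isoMk (Iso.refl _) e (Iso.refl _) ?_ ?_) hS'
  · simp [e]
  · simp [e]

/-- Two short exact sequences with the same right term have a common pullback. -/
lemma exists_pullback_ses {K A M H A' : D} {f : A ⟶ K} {g : M ⟶ A} {f' : H ⟶ K} {g' : A' ⟶ H}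
    (h : IsSES g f) (h' : IsSES g' f') :
    ∃ (E : D) (i : M ⟶ E) (p : E ⟶ H) (i' : A' ⟶ E) (p' : E ⟶ A), IsSES i p ∧ IsSES i' p' := by
  obtain ⟨w, hS⟩ := isSES_pullback h f'
  obtain ⟨w', hS'⟩ := isSES_pullback h' f
  let e := pullbackSymmetry f' f
  refine ⟨_, _, _, pullback.lift g' 0 (by rw [h'.1, zero_comp]) ≫ e.hom, pullback.fst f f',
    ⟨w, hS⟩, by simpa [e] using w', ?_⟩
  refine ShortComplex.shortExact_of_iso (S₁ := ShortComplex.mk _ _ w')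
    (ShortComplex.isoMk (Iso.refl _) e (Iso.refl _) ?_ ?_) hS'
  · simp [e]
  · simp [e]

/-- If `H ⊆ E ⊆ W`, then `E/H ⊆ W/H` with quotient `W/E`. -/
lemma exists_quot_ses {H E M W A : D} {i : H ⟶ E} {p : E ⟶ M} {j : E ⟶ W} {q : W ⟶ A}
    (h : IsSES i p) (h' : IsSES j q) :
    ∃ (Q : D) (a : H ⟶ W) (b : W ⟶ Q) (c : M ⟶ Q) (d : Q ⟶ A), IsSES a b ∧ IsSES c d := by
  obtain ⟨w, hS⟩ := h
  have : Mono i := hS.mono_f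
  have : Epi p := hS.epi_g
  have : Mono j := h'.2.mono_f
  have w0 : (i ≫ j) ≫ pushout.inl j p = 0 := by
    rw [Category.assoc, pushout.condition, reassoc_of% w, zero_comp]
  refine ⟨_, i ≫ j, pushout.inl j p, _, _, ⟨w0, { exact := ?_, mono_f := ?_, epi_g := ?_ }⟩,
    isSES_pushout h' p⟩
  · refine ShortComplex.exact_of_g_is_cokernel _ (CokernelCofork.IsColimit.ofπ' _ _ ?_)
    intro T x hx
    have hx' : i ≫ j ≫ x = 0 := by rw [← Category.assoc]; exact hx
    exact ⟨pushout.desc x (hS.exact.desc (j ≫ x) hx') (hS.exact.g_desc _ _).symm,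
      pushout.inl_desc _ _ _⟩
  · exact inferInstanceAs (Mono (i ≫ j))
  · exact inferInstanceAs (Epi (pushout.inl j p))

/-- Dual of `exists_quot_ses`. -/
lemma exists_sub_ses {H E M W A : D} {i : E ⟶ H} {p : M ⟶ E} {j : W ⟶ E} {q : A ⟶ W}
    (h : IsSES p i) (h' : IsSES q j) :
    ∃ (Q : D) (a : W ⟶ H) (b : Q ⟶ W) (c : Q ⟶ M) (d : A ⟶ Q), IsSES b a ∧ IsSES d c := by
  obtain ⟨w, hS⟩ := h
  have : Epi i := hS.epi_g
  have : Mono p := hS.mono_f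
  have : Epi j := h'.2.epi_g
  have w0 : pullback.fst j p ≫ j ≫ i = 0 := by
    rw [pullback.condition_assoc, w, comp_zero]
  refine ⟨_, j ≫ i, pullback.fst j p, _, _, ⟨w0, { exact := ?_, mono_f := ?_, epi_g := ?_ }⟩,
    isSES_pullback h' p⟩
  · refine ShortComplex.exact_of_f_is_kernel _ (KernelFork.IsLimit.ofι' _ _ ?_)
    intro T x hx
    have hx' : (x ≫ j) ≫ i = 0 := by rw [Category.assoc]; exact hx
    exact ⟨pullback.lift x (hS.exact.lift (x ≫ j) hx') (hS.exact.lift_f _ _).symm,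
      pullback.lift_fst _ _ _⟩
  · exact inferInstanceAs (Mono (pullback.fst j p))
  · exact inferInstanceAs (Epi (j ≫ i))

/-- Every `M ∈ X^∧` embeds in an object of `ω^∧` with quotient in `X`. -/
lemma exists_hull {X ω : Set D} (hX : ExtensionClosed X) (hω : RelQuasiCogenerator ω X) :
    ∀ n : ℕ, ∀ M ∈ ResDimLE X n,
      ∃ H ∈ ResDimLE ω n, ∃ A ∈ X, ∃ (f : M ⟶ H) (g : H ⟶ A), IsSES f g := by
  intro n
  induction n with
  | zero => exact fun M hM => hω M hM
  | succ n ih =>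
    rintro M ⟨K, hK, A, hA, f, g, hfg⟩
    obtain ⟨H', hH', A', hA', f', g', hfg'⟩ := ih K hK
    obtain ⟨E, i, p, i', p', hip, hip'⟩ := exists_pushout_ses hfg hfg'
    obtain ⟨W, hW, A'', hA'', j, q, hjq⟩ := hω E (hX i' p' hA hA' hip')
    obtain ⟨Q, a, b, c, d, hab, hcd⟩ := exists_quot_ses hip hjq
    exact ⟨Q, ⟨H', hH', W, hW, a, b, hab⟩, A'', hA'', c, d, hcd⟩

/-- Every `N ∈ Y^∨` is a quotient of an object of `ν^∨` with kernel in `Y`. -/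
lemma exists_cover {Y ν : Set D} (hY : ExtensionClosed Y) (hν : RelQuasiGenerator ν Y) :
    ∀ n : ℕ, ∀ N ∈ CoresDimLE Y n,
      ∃ L ∈ CoresDimLE ν n, ∃ B ∈ Y, ∃ (f : B ⟶ L) (g : L ⟶ N), IsSES f g := by
  intro n
  induction n with
  | zero => exact fun N hN => hν N hN
  | succ n ih =>
    rintro N ⟨B, hB, K, hK, f, g, hfg⟩
    obtain ⟨L', hL', B', hB', f', g', hfg'⟩ := ih K hK
    obtain ⟨E, i, p, i', p', hip, hip'⟩ := exists_pullback_ses hfg hfg'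
    obtain ⟨V, hV, B'', hB'', q, j, hqj⟩ := hν E (hY i' p' hB' hB hip')
    obtain ⟨Q, a, b, c, d, hba, hdc⟩ := exists_sub_ses hip hqj
    exact ⟨Q, ⟨V, hV, L', hL', b, a, hba⟩, B'', hB'', d, c, hdc⟩

end BalancedSystems

/-! ### The characterization -/

open BalancedSystems in
/-- Under conditions (1)–(4) of the definition of strongly
finite balanced system, `[(X,ω);(ν,Y)]` is a strongly finite balanced system
if and only if conditions (1)–(5) of Proposition `prop:characterization_fbs`
hold. -/
theorem statement13 {C : Type u} [Category.{v} C] [Abelian C] [HasExt.{w} C]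
    (𝒳 ω ν 𝒴 : Set C)
    (h1 : IsoClosed 𝒳) (h2 : IsoClosed ω) (h3 : IsoClosed ν) (h4 : IsoClosed 𝒴)
    (hXp : Pointed 𝒳) (hXe : ExtensionClosed 𝒳)
    (hYp : Pointed 𝒴) (hYe : ExtensionClosed 𝒴)
    (hω : RelCogenerator ω 𝒳)
    (hωid : ∀ A ∈ 𝒳, ∀ W ∈ ω, ∀ i : ℕ, 1 ≤ i → ExtZero.{w} A W i)
    (hν : RelGenerator ν 𝒴)
    (hνpd : ∀ V ∈ ν, ∀ B ∈ 𝒴, ∀ i : ℕ, 1 ≤ i → ExtZero.{w} V B i) :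
    IsStronglyFiniteBalancedSystem.{w} 𝒳 ω ν 𝒴 ↔
      ((∀ H ∈ ResHat ω, ∀ V ∈ ν, ExtZero.{w} H V 1) ∧
        (∀ A ∈ 𝒳, ∀ V ∈ ν, ExtZero.{w} A V 2) ∧
        (∀ W ∈ ω, ∀ L ∈ CoresVee ν, ExtZero.{w} W L 1) ∧
        (∀ W ∈ ω, ∀ B ∈ 𝒴, ExtZero.{w} W B 2) ∧
        (∀ M ∈ ResHat ω, ∃ n : ℕ, ∀ i : ℕ, n < i → ∀ B ∈ 𝒴, ExtZero.{w} M B i) ∧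
        (∀ N ∈ CoresVee ν, ∃ n : ℕ, ∀ i : ℕ, n < i → ∀ A ∈ 𝒳, ExtZero.{w} A N i) ∧
        (∀ W ∈ ω, ∀ V ∈ ν, ∀ i : ℕ, 1 ≤ i → ExtZero.{w} W V i)) := by
  constructor
  · intro h
    refine ⟨fun H hH V hV => h.ext1_hatOmega_Y H hH V (hν.1 hV),
      fun A hA V hV => h.idXnu A hA V hV 2 (by omega),
      fun W hW L hL => h.ext1_X_veeNu W (hω.1 hW) L hL,
      fun W hW B hB => h.pdYomega W hW B hB 2 (by omega), ?_, ?_,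
      fun W hW V hV => h.pdYomega W hW V (hν.1 hV)⟩
    · rintro M ⟨n, hM⟩
      exact ⟨n, fun i hi B hB =>
        extZero_resDimLE (fun W hW => h.pdYomega W hW B hB) n M hM i hi⟩
    · rintro N ⟨n, hN⟩
      exact ⟨n, fun i hi A hA =>
        extZero_coresDimLE (fun V hV => h.idXnu A hA V hV) n N hN i hi⟩
  · rintro ⟨hHν, -, hωL, -, hpd, hid, hων⟩
    have hωY : ∀ H ∈ ResHat ω, ∀ B ∈ 𝒴, ∀ i : ℕ, 1 ≤ i → ExtZero.{w} H B i := fun H hH =>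
      extZero_of_relQuasiGenerator hν.2
        (fun V hV => extZero_resHat (fun W hW => hων W hW V hV)
          (fun H hH => hHν H hH V hV) H hH) (hpd H hH)
    have hXν : ∀ L ∈ CoresVee ν, ∀ A ∈ 𝒳, ∀ i : ℕ, 1 ≤ i → ExtZero.{w} A L i := fun L hL =>
      extZero_of_relQuasiCogenerator hω.2
        (fun W hW => extZero_coresVee (fun V hV => hων W hW V hV)
          (fun L hL => hωL W hW L hL) L hL) (hid L hL)
    -- Objects of `ω` and `ν` are their own resolutions of length `0`.
    have hωY0 := fun W (hW : W ∈ ω) => hωY W ⟨0, hW⟩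
    have hXν0 := fun V (hV : V ∈ ν) => hXν V ⟨0, hV⟩
    exact
      { pointedX := hXp
        extClosedX := hXe
        pointedY := hYp
        extClosedY := hYe
        relCogenOmega := hω
        idXomega := hωid
        relGenNu := hν
        pdYnu := hνpd
        ext1_hatX_nu := by
          rintro M ⟨n, hM⟩ V hV
          obtain ⟨H, hH, A, hA, f, g, hfg⟩ := exists_hull hXe hω.2 n M hM
          exact extZero_left_sub hfg (hHν H ⟨n, hH⟩ V hV) (hXν0 V hV A hA 2 (by omega))
        ext1_hatOmega_Y := fun H hH B hB => hωY H hH B hB 1 le_rfl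
        ext1_omega_veeY := by
          rintro W hW N ⟨n, hN⟩
          obtain ⟨L, hL, B, hB, f, g, hfg⟩ := exists_cover hYe hν.2 n N hN
          exact extZero_right_quot hfg (hωL W hW L ⟨n, hL⟩) (hωY0 W hW B hB 2 (by omega))
        ext1_X_veeNu := fun A hA L hL => hXν L hL A hA 1 le_rfl
        pdYomega := hωY0
        idXnu := fun A hA V hV => hXν0 V hV A hA }
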